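/- For every real a with 0 ≤ a ≤ 1, ∫_{−a}^{a} ln(1 + x)/√(a^2 − x^2) dx = π ln((1 + √(1 − a^2))/2). -/

import Mathlib

open Real

open MeasureTheory Polynomial.Chebyshev Set

/-!
The substitution `x = a cos t` turns the integral into `∫ t in 0..π, log (1 + a cos t)`. With
`s = √(1 - a²)` and `r = a / (1 + s)`, one has `1 + a cos t = (1 + s) / 2 * |e^{it} + r|²`, and
`log |e^{it} + r|` has mean zero over the circle because `|r| ≤ 1` (Jensen's formula). Only the
constant `log ((1 + s) / 2)` survives.
-/

lemma integral_div_sqrt_sq_sub_sq (f : ℝ → ℝ) {a : ℝ} (ha : 0 < a) :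
    ∫ x in (-a)..a, f x / √(a ^ 2 - x ^ 2) = ∫ t in 0..π, f (a * cos t) := by
  have sqrt_scale (u : ℝ) : √(a ^ 2 - (a * u) ^ 2) = a * √(1 - u ^ 2) := by
    rw [show a ^ 2 - (a * u) ^ 2 = a ^ 2 * (1 - u ^ 2) by ring, sqrt_mul (sq_nonneg a),
      sqrt_sq ha.le]
  calc ∫ x in (-a)..a, f x / √(a ^ 2 - x ^ 2)
      = a * ∫ u in (-1)..1, f (a * u) / √(a ^ 2 - (a * u) ^ 2) := by
        simpa using (intervalIntegral.smul_integral_comp_mul_left (a := -1) (b := 1)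
          (fun x ↦ f x / √(a ^ 2 - x ^ 2)) a).symm
    _ = ∫ u in (-1)..1, f (a * u) * √(1 - u ^ 2)⁻¹ := by
        simp only [← intervalIntegral.integral_const_mul, sqrt_scale, sqrt_inv]
        field_simp
    _ = ∫ t in 0..π, f (a * cos t) := by
        rw [← integral_measureT (fun u ↦ f (a * u)), integral_measureT_eq_integral_cos]

lemma integral_zero_two_mul_of_reflection {E : Type*} [NormedAddCommGroup E] [NormedSpace ℝ E]
    {f : ℝ → E} {c : ℝ} (hf : IntervalIntegrable f volume 0 c) (hsymm : ∀ t, f (2 * c - t) = f t) :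
    ∫ t in 0..(2 * c), f t = (2 : ℝ) • ∫ t in 0..c, f t := by
  have reflect : 2 * c - c = c := by ring
  have hf_right : IntervalIntegrable f volume c (2 * c) := by
    simpa only [hsymm, sub_zero, reflect] using (hf.comp_sub_left (2 * c)).symm
  have integral_right : ∫ t in c..(2 * c), f t = ∫ t in 0..c, f t := by
    simpa only [hsymm, sub_zero, reflect] using
      (intervalIntegral.integral_comp_sub_left (a := 0) (b := c) f (2 * c)).symm
  rw [← intervalIntegral.integral_add_adjacent_intervals hf hf_right, integral_right, two_smul]

lemma norm_circleMap_add_ofReal_sq (r t : ℝ) :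
    ‖circleMap 0 1 t + r‖ ^ 2 = 1 + 2 * r * cos t + r ^ 2 := by
  rw [Complex.sq_norm, Complex.normSq_apply]
  simp only [circleMap_zero, Complex.ofReal_one, one_mul, Complex.add_re, Complex.add_im,
    Complex.exp_ofReal_mul_I_re, Complex.exp_ofReal_mul_I_im, Complex.ofReal_re, Complex.ofReal_im]
  linear_combination sin_sq_add_cos_sq t

lemma intervalIntegrable_log_one_add_two_mul_cos_add_sq (r b c : ℝ) :
    IntervalIntegrable (fun t ↦ log (1 + 2 * r * cos t + r ^ 2)) volume b c :=
  MeromorphicOn.intervalIntegrable_log fun t _ ↦ by fun_prop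

lemma integral_zero_two_pi_log_one_add_two_mul_cos_add_sq (r : ℝ) :
    ∫ t in 0..(2 * π), log (1 + 2 * r * cos t + r ^ 2) = 4 * π * log⁺ r := by
  have mean : (2 * π)⁻¹ * ∫ t in 0..(2 * π), log ‖circleMap 0 1 t + r‖ = log⁺ r := by
    simpa [circleAverage_def] using circleAverage_log_norm_sub_const_eq_posLog (a := -(r : ℂ))
  calc ∫ t in 0..(2 * π), log (1 + 2 * r * cos t + r ^ 2)
      = 2 * ∫ t in 0..(2 * π), log ‖circleMap 0 1 t + r‖ := by
        simp only [← norm_circleMap_add_ofReal_sq, log_pow, Nat.cast_ofNat,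
          intervalIntegral.integral_const_mul]
    _ = 4 * π * log⁺ r := by
        rw [← mean]
        field_simp
        ring

lemma integral_zero_pi_log_one_add_two_mul_cos_add_sq (r : ℝ) :
    ∫ t in 0..π, log (1 + 2 * r * cos t + r ^ 2) = 2 * π * log⁺ r := by
  have halve := integral_zero_two_mul_of_reflection
    (intervalIntegrable_log_one_add_two_mul_cos_add_sq r 0 π) (fun t ↦ by rw [cos_two_pi_sub])
  rw [integral_zero_two_pi_log_one_add_two_mul_cos_add_sq, smul_eq_mul] at halve
  linarith

lemma one_add_mul_eq_mul_quadratic {a s : ℝ} (hs : s ^ 2 = 1 - a ^ 2) (hs_ne : 1 + s ≠ 0) (c : ℝ) :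
    1 + a * c = (1 + s) / 2 * (1 + 2 * (a / (1 + s)) * c + (a / (1 + s)) ^ 2) := by
  field_simp
  linear_combination -hs

lemma one_add_mul_cos_pos {a t : ℝ} (ha : |a| ≤ 1) (ht : t ∈ Ioo 0 π) : 0 < 1 + a * cos t := by
  have abs_cos_lt : |cos t| < 1 := abs_lt.2 (mapsTo_cos_Ioo ht)
  have abs_mul_lt : |a * cos t| < 1 := by
    rw [abs_mul]
    exact mul_lt_one_of_nonneg_of_lt_one_right ha (abs_nonneg _) abs_cos_lt
  linarith [(abs_lt.1 abs_mul_lt).1]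

lemma integral_log_one_add_mul_cos {a : ℝ} (ha : |a| ≤ 1) :
    ∫ t in 0..π, log (1 + a * cos t) = π * log ((1 + √(1 - a ^ 2)) / 2) := by
  set s := √(1 - a ^ 2)
  set r := a / (1 + s) with r_def
  have s_sq : s ^ 2 = 1 - a ^ 2 := sq_sqrt (sub_nonneg.2 ((sq_le_one_iff_abs_le_one a).2 ha))
  have one_add_s_pos : 0 < 1 + s := by positivity
  have abs_r_le : |r| ≤ 1 := by
    rw [r_def, abs_div, abs_of_pos one_add_s_pos, div_le_one one_add_s_pos]
    linarith [sqrt_nonneg (1 - a ^ 2)]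
  have log_split : ∀ t ∈ Ioo 0 π,
      log (1 + a * cos t) = log ((1 + s) / 2) + log (1 + 2 * r * cos t + r ^ 2) := by
    intro t ht
    have factor := one_add_mul_eq_mul_quadratic s_sq one_add_s_pos.ne' (cos t)
    have prod_ne := (one_add_mul_cos_pos ha ht).ne'
    rw [factor] at prod_ne ⊢
    exact log_mul (left_ne_zero_of_mul prod_ne) (right_ne_zero_of_mul prod_ne)
  calc ∫ t in 0..π, log (1 + a * cos t)
      = ∫ t in 0..π, (log ((1 + s) / 2) + log (1 + 2 * r * cos t + r ^ 2)) :=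
        intervalIntegral.integral_congr_Ioo_of_le pi_nonneg log_split
    _ = π * log ((1 + s) / 2) + 2 * π * log⁺ r := by
        rw [intervalIntegral.integral_add intervalIntegrable_const
            (intervalIntegrable_log_one_add_two_mul_cos_add_sq r 0 π),
          intervalIntegral.integral_const, sub_zero, smul_eq_mul,
          integral_zero_pi_log_one_add_two_mul_cos_add_sq]
    _ = π * log ((1 + s) / 2) := by
        rw [(posLog_eq_zero_iff r).2 abs_r_le, mul_zero, add_zero]

theorem stmt13 (a : ℝ) (h0 : 0 ≤ a) (h1 : a ≤ 1) :
    ∫ x in (-a)..a, Real.log (1 + x) / Real.sqrt (a^2 - x^2)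
      = π * Real.log ((1 + Real.sqrt (1 - a^2)) / 2) := by
  rcases h0.eq_or_lt with rfl | ha
  · simp
  · rw [integral_div_sqrt_sq_sub_sq (fun x ↦ log (1 + x)) ha]
    exact integral_log_one_add_mul_cos (abs_le.2 ⟨by linarith, h1⟩)
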